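/- arXiv:1810.12475 — 3 statements merged into one kernel-verified Lean document; each statement's English description precedes it below -/
import Mathlib

section
/- For every integer w and all nonnegative integers u, ℓ that are not both zero, T(w,u,ℓ) = 0. -/
open Finset

noncomputable section

/-- The field `ℚ(q)` of rational functions over `ℚ`. -/
abbrev F : Type := RatFunc ℚ

/-- The indeterminate `q`. -/
noncomputable def qq : F := RatFunc.X

/-- The quantum integer `[n]` with base `v`: `(v^n - v^(-n))/(v - v⁻¹)`. -/
noncomputable def qint (v : F) (n : ℤ) : F := (v ^ n - v ^ (-n)) / (v - v⁻¹)

/-- The quantum factorial `[m]! = [1][2]⋯[m]` with base `v`. -/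
noncomputable def qfact (v : F) (m : ℕ) : F := ∏ k ∈ range m, qint v ((k : ℤ) + 1)

/-- The quantum binomial coefficient `C_v(n,d) = [n][n-1]⋯[n-d+1]/[d]!` for `d ≥ 0`,
and `0` for `d < 0`. -/
noncomputable def qbinom (v : F) (n d : ℤ) : F :=
  if d < 0 then 0
  else (∏ k ∈ range d.toNat, qint v (n - (k : ℤ))) / qfact v d.toNat

/-- The function `T(w,u,ℓ)` of [CLW, (3.14)]. -/
noncomputable def T (w : ℤ) (u ℓ : ℕ) : F :=
  (∑ c ∈ range (u + 1), ∑ e ∈ range (u + 1 - c), ∑ t ∈ range (ℓ + 1),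
      (let r : ℕ := u - c - e;
       if Even ((t : ℤ) + w - (r : ℤ)) then
         qq ^ (-(t : ℤ) * ((ℓ : ℤ) + (u : ℤ) - 1) + ((ℓ : ℤ) + (u : ℤ)) * ((c : ℤ) - (e : ℤ)))
           * qbinom qq (ℓ : ℤ) (t : ℤ) * qbinom qq (w + (t : ℤ) - (ℓ : ℤ)) (r : ℤ)
           * qbinom (qq ^ 2) ((u : ℤ) - 1 + (w + (t : ℤ) - (r : ℤ)) / 2) (c : ℤ)
           * qbinom (qq ^ 2) ((w + (t : ℤ) - (r : ℤ)) / 2 - (ℓ : ℤ)) (e : ℤ)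
       else 0))
  - (∑ c ∈ range (u + 1), ∑ e ∈ range (u + 1 - c), ∑ t ∈ range (ℓ + 1),
      (let r : ℕ := u - c - e;
       if ¬ Even ((t : ℤ) + w - (r : ℤ)) then
         qq ^ (-(t : ℤ) * ((ℓ : ℤ) + (u : ℤ) - 1) + ((ℓ : ℤ) + (u : ℤ) - 1) * ((c : ℤ) - (e : ℤ)))
           * qbinom qq (ℓ : ℤ) (t : ℤ) * qbinom qq (w + (t : ℤ) - (ℓ : ℤ)) (r : ℤ)
           * qbinom (qq ^ 2) ((u : ℤ) + (w + (t : ℤ) - (r : ℤ) - 1) / 2) (c : ℤ)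
           * qbinom (qq ^ 2) ((w + (t : ℤ) - (r : ℤ) - 1) / 2 - (ℓ : ℤ)) (e : ℤ)
       else 0))

section Generic
open PowerSeries

variable {K : Type*} [Field K]

/-- `v` is nonzero and not a root of unity. -/
def Gen (v : K) : Prop := v ≠ 0 ∧ ∀ n : ℤ, n ≠ 0 → v ^ n ≠ 1

lemma Gen.sq {v : K} (h : Gen v) : Gen (v ^ 2) := by
  refine ⟨pow_ne_zero _ h.1, fun n hn => ?_⟩
  have := h.2 (2 * n) (by omega)
  rw [zpow_mul] at this
  exact_mod_cast this

def pz (v : K) (k : ℕ) : K := ∏ s ∈ range k, (1 - v ^ (-2 * ((s : ℤ) + 1)))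

lemma one_sub_ne {v : K} (h : Gen v) (s : ℕ) : (1 - v ^ (-2 * ((s : ℤ) + 1))) ≠ 0 := by
  have := h.2 (-2 * ((s : ℤ) + 1)) (by omega)
  exact sub_ne_zero.2 (Ne.symm this)

lemma pz_ne {v : K} (h : Gen v) (k : ℕ) : pz v k ≠ 0 :=
  Finset.prod_ne_zero_iff.2 fun s _ => one_sub_ne h s

lemma pz_succ (v : K) (k : ℕ) : pz v (k + 1) = pz v k * (1 - v ^ (-2 * ((k : ℤ) + 1))) := by
  simp [pz, Finset.prod_range_succ]

def Pc (v : K) (k : ℕ) : K := v ^ (-((k : ℤ) * (k - 1))) / pz v k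
def Ec (v : K) (k : ℕ) : K := (-1) ^ k / pz v k
def PP (v : K) : PowerSeries K := PowerSeries.mk (Pc v)
def EE (v : K) : PowerSeries K := PowerSeries.mk (Ec v)
def Sc (v : K) (a : ℤ) (f : PowerSeries K) : PowerSeries K := PowerSeries.rescale (v ^ a) f

lemma Sc_mul (v : K) (a : ℤ) (f g : PowerSeries K) : Sc v a (f * g) = Sc v a f * Sc v a g := by
  simp [Sc]

lemma Sc_Sc {v : K} (h : Gen v) (a b : ℤ) (f : PowerSeries K) :
    Sc v a (Sc v b f) = Sc v (a + b) f := by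
  simp only [Sc]
  rw [PowerSeries.rescale_rescale, zpow_add₀ h.1, mul_comm]

lemma Sc_zero (v : K) (f : PowerSeries K) : Sc v 0 f = f := by
  simp [Sc, PowerSeries.rescale_one]

lemma Sc_one (v : K) (a : ℤ) : Sc v a 1 = 1 := by simp [Sc]

lemma Sc_sq (v : K) (a : ℤ) (f : PowerSeries K) : Sc (v ^ 2) a f = Sc v (2 * a) f := by
  simp only [Sc]; rw [zpow_mul]; norm_cast

lemma coeff_Sc (v : K) (a : ℤ) (f : PowerSeries K) (n : ℕ) :
    PowerSeries.coeff n (Sc v a f) = v ^ (a * n) * PowerSeries.coeff n f := by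
  simp [Sc, PowerSeries.coeff_rescale, zpow_mul]

lemma PP_eq {v : K} (h : Gen v) : PP v = (1 + X) * Sc v (-2) (PP v) := by
  ext n
  rw [add_mul, one_mul, map_add, coeff_Sc]
  cases n with
  | zero => simp
  | succ k =>
    rw [PowerSeries.coeff_succ_X_mul, coeff_Sc]
    simp only [PP, PowerSeries.coeff_mk, Pc, pz_succ]
    have h1 := pz_ne h k
    have h2 := one_sub_ne h k
    have e1 : v ^ (-(((k + 1 : ℕ) : ℤ) * (((k + 1 : ℕ) : ℤ) - 1)))
        = v ^ (-2 * (k : ℤ)) * v ^ (-((k : ℤ) * (k - 1))) := by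
      rw [← zpow_add₀ h.1]; congr 1; push_cast; ring
    rw [e1]
    push_cast
    field_simp
    ring

lemma EE_eq {v : K} (h : Gen v) : Sc v (-2) (EE v) = (1 + X) * EE v := by
  ext n
  rw [add_mul, one_mul, map_add, coeff_Sc]
  cases n with
  | zero => simp
  | succ k =>
    rw [PowerSeries.coeff_succ_X_mul]
    simp only [EE, PowerSeries.coeff_mk, Ec, pz_succ]
    have h1 := pz_ne h k
    have h2 := one_sub_ne h k
    push_cast
    rw [pow_succ]
    field_simp
    ring

lemma PP_mul_EE {v : K} (h : Gen v) : PP v * EE v = 1 := by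
  have key : PP v * EE v = Sc v (-2) (PP v * EE v) := by
    rw [Sc_mul, EE_eq h]
    nth_rewrite 1 [PP_eq h]
    ring
  ext n
  cases n with
  | zero => simp [PowerSeries.coeff_mul, PP, EE, Pc, Ec, pz]
  | succ k =>
    have h3 := congrArg (PowerSeries.coeff (k + 1)) key
    rw [coeff_Sc] at h3
    have h2 := one_sub_ne h k
    have h4 : (1 - v ^ (-2 * ((k : ℤ) + 1))) * PowerSeries.coeff (k + 1) (PP v * EE v) = 0 := by
      push_cast at h3
      linear_combination h3
    rcases mul_eq_zero.1 h4 with h5 | h5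
    · exact absurd h5 h2
    · rw [h5, PowerSeries.coeff_one]; simp

/-- uniqueness of solution of the functional equation, via `EE`. -/
lemma PP_unique {v : K} (h : Gen v) (f : PowerSeries K) (h0 : PowerSeries.coeff 0 f = 1)
    (hf : f = (1 + X) * Sc v (-2) f) : f = PP v := by
  have key : f * EE v = Sc v (-2) (f * EE v) := by
    rw [Sc_mul, EE_eq h]
    nth_rewrite 1 [hf]
    ring
  have : f * EE v = 1 := by
    ext n
    cases n with
    | zero =>
      rw [PowerSeries.coeff_mul]; simp [h0, EE, Ec, pz]
    | succ k =>
      have h3 := congrArg (PowerSeries.coeff (k + 1)) key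
      rw [coeff_Sc] at h3
      have h2 := one_sub_ne h k
      have h4 : (1 - v ^ (-2 * ((k : ℤ) + 1))) * PowerSeries.coeff (k + 1) (f * EE v) = 0 := by
        push_cast at h3
        linear_combination h3
      rcases mul_eq_zero.1 h4 with h5 | h5
      · exact absurd h5 h2
      · rw [h5, PowerSeries.coeff_one]; simp
  calc f = f * (PP v * EE v) := by rw [PP_mul_EE h, mul_one]
    _ = (f * EE v) * PP v := by ring
    _ = PP v := by rw [this, one_mul]

lemma PP_sq {v : K} (h : Gen v) : PP v = PP (v ^ 2) * Sc v (-2) (PP (v ^ 2)) := by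
  symm
  apply PP_unique h
  · rw [PowerSeries.coeff_mul]; simp [PP, Pc, pz, Sc]
  · rw [Sc_mul, Sc_Sc h]
    nth_rewrite 1 [PP_eq h.sq]
    rw [Sc_sq]
    norm_num
    ring

lemma EE_sq {v : K} (h : Gen v) : EE v = EE (v ^ 2) * Sc v (-2) (EE (v ^ 2)) := by
  have h1 : PP v * (EE (v ^ 2) * Sc v (-2) (EE (v ^ 2))) = 1 := by
    rw [PP_sq h]
    calc _ = (PP (v ^ 2) * EE (v ^ 2)) * (Sc v (-2) (PP (v ^ 2)) * Sc v (-2) (EE (v ^ 2))) := by ring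
      _ = 1 := by rw [← Sc_mul, PP_mul_EE h.sq, Sc_one, one_mul]
  calc EE v = EE v * (PP v * (EE (v ^ 2) * Sc v (-2) (EE (v ^ 2)))) := by rw [h1, mul_one]
    _ = (PP v * EE v) * (EE (v ^ 2) * Sc v (-2) (EE (v ^ 2))) := by ring
    _ = _ := by rw [PP_mul_EE h, one_mul]

def qi (v : K) (n : ℤ) : K := (v ^ n - v ^ (-n)) / (v - v⁻¹)
def gb (v : K) (m : ℤ) (c : ℕ) : K :=
  (∏ k ∈ range c, qi v (m - (k : ℤ))) / ∏ k ∈ range c, qi v ((k : ℤ) + 1)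

lemma Gen.den {v : K} (h : Gen v) : v - v⁻¹ ≠ 0 := by
  intro h1
  have h2 := h.2 2 (by norm_num)
  have h0 := h.1
  apply h2
  field_simp at h1
  have : v ^ (2 : ℤ) = v ^ 2 := by norm_cast
  rw [this]
  linear_combination h1

lemma qi_ne {v : K} (h : Gen v) (k : ℤ) (hk : k ≠ 0) : qi v k ≠ 0 := by
  refine div_ne_zero ?_ h.den
  intro h1
  apply h.2 (2 * k) (by omega)
  have : v ^ (2 * k) = v ^ k * v ^ k := by rw [← zpow_add₀ h.1]; congr 1; ring
  rw [this]
  nth_rewrite 1 [sub_eq_zero.1 h1]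
  rw [← zpow_add₀ h.1]; simp

lemma qi_add {v : K} (h : Gen v) (a b : ℤ) :
    qi v (a + b) = v ^ (-b) * qi v a + v ^ a * qi v b := by
  have h0 := h.1
  simp only [qi, zpow_add₀ h0, zpow_neg]
  have := h.den
  have ha := zpow_ne_zero a h0
  have hb := zpow_ne_zero b h0
  field_simp
  ring

lemma prod_qi_shift (v : K) (m : ℤ) (c : ℕ) :
    ∏ k ∈ range (c + 1), qi v (m + 1 - (k : ℤ)) = qi v (m + 1) * ∏ k ∈ range c, qi v (m - (k : ℤ)) := by
  rw [Finset.prod_range_succ', mul_comm]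
  congr 1
  · simp
  · apply Finset.prod_congr rfl; intro k _; congr 1; push_cast; ring

lemma gb_pascal {v : K} (h : Gen v) (m : ℤ) (c : ℕ) :
    gb v (m + 1) (c + 1) = v ^ (-((c : ℤ) + 1)) * gb v m (c + 1) + v ^ (m - c) * gb v m c := by
  simp only [gb]
  rw [prod_qi_shift, Finset.prod_range_succ, Finset.prod_range_succ]
  have h1 : ∏ k ∈ range c, qi v ((k : ℤ) + 1) ≠ 0 :=
    Finset.prod_ne_zero_iff.2 fun s _ => qi_ne h _ (by omega)
  have h2 := qi_ne h ((c : ℤ) + 1) (by omega)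
  have h3 := qi_add h (m - c) (c + 1)
  rw [show m - (c : ℤ) + (c + 1) = m + 1 by ring] at h3
  rw [h3]
  field_simp

lemma gb_zero_right (v : K) (m : ℤ) : gb v m 0 = 1 := by simp [gb]

lemma gb_eq_zero (v : K) (m c : ℕ) (hmc : m < c) : gb v m c = 0 := by
  unfold gb
  rw [Finset.prod_eq_zero (Finset.mem_range.2 hmc), zero_div]
  simp [qi]

def GG (v : K) (m : ℤ) : PowerSeries K := PowerSeries.mk (gb v m)

lemma GG_succ {v : K} (h : Gen v) (m : ℤ) :
    GG v (m + 1) = (1 + Sc v m X) * Sc v (-1) (GG v m) := by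
  have hX : Sc v m X = PowerSeries.C (v ^ m) * X := by
    simp [Sc, PowerSeries.rescale_X]
  rw [hX]
  ext n
  rw [add_mul, one_mul, map_add, coeff_Sc, mul_assoc, PowerSeries.coeff_C_mul]
  cases n with
  | zero => simp [GG, gb_zero_right]
  | succ k =>
    rw [PowerSeries.coeff_succ_X_mul, coeff_Sc]
    simp only [GG, PowerSeries.coeff_mk]
    rw [gb_pascal h, ← mul_assoc (v ^ m), ← zpow_add₀ h.1]
    congr 3
    · push_cast; ring
    · ring

def HH (v : K) (m : ℤ) : PowerSeries K := Sc v (m - 1) (PP v) * Sc v (-m - 1) (EE v)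

lemma HH_succ {v : K} (h : Gen v) (m : ℤ) :
    HH v (m + 1) = (1 + Sc v m X) * Sc v (-1) (HH v m) := by
  unfold HH
  rw [Sc_mul, Sc_Sc h, Sc_Sc h]
  rw [show m + 1 - 1 = m by ring]
  nth_rewrite 1 [PP_eq h]
  rw [Sc_mul, Sc_Sc h]
  have : Sc v m (1 + X) = 1 + Sc v m X := by simp [Sc]
  rw [this, show m + -2 = -1 + (m - 1) by ring, show -(m + 1) - 1 = -1 + (-m - 1) by ring]
  ring

lemma Sc_inj {v : K} (h : Gen v) (a : ℤ) {f g : PowerSeries K} (hfg : Sc v a f = Sc v a g) :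
    f = g := by
  have := congrArg (Sc v (-a)) hfg
  rw [Sc_Sc h, Sc_Sc h] at this
  simpa [Sc_zero] using this

lemma GG_eq {v : K} (h : Gen v) (m : ℤ) : GG v m = HH v m := by
  have h0 : GG v 0 = HH v 0 := by
    unfold HH
    rw [show (0 : ℤ) - 1 = -1 by ring, show -(0 : ℤ) - 1 = -1 by ring, ← Sc_mul, PP_mul_EE h, Sc_one]
    ext n
    cases n with
    | zero => simp [GG, gb_zero_right]
    | succ k =>
      simp only [GG, PowerSeries.coeff_mk]
      have := gb_eq_zero v 0 (k + 1) (by omega)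
      rw [PowerSeries.coeff_one]
      simpa using this
  induction m using Int.induction_on with
  | zero => exact h0
  | succ i ih => rw [GG_succ h, HH_succ h, ih]
  | pred i ih =>
    have h1 := GG_succ h (-(i : ℤ) - 1)
    have h2 := HH_succ h (-(i : ℤ) - 1)
    rw [show -(i : ℤ) - 1 + 1 = -i by ring] at h1 h2
    rw [h1, h2] at ih
    apply Sc_inj h (-1)
    refine mul_left_cancel₀ ?_ ih
    intro h3
    have := congrArg (PowerSeries.coeff 0) h3
    simp [Sc] at this

lemma gb_expand {v : K} (h : Gen v) (m : ℤ) (c : ℕ) :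
    gb v m c = ∑ x ∈ antidiagonal c,
      (v ^ ((m - 1) * (x.1 : ℤ)) * Pc v x.1) * (v ^ ((-m - 1) * (x.2 : ℤ)) * Ec v x.2) := by
  have := congrArg (PowerSeries.coeff c) (GG_eq h m)
  rw [HH, PowerSeries.coeff_mul] at this
  simpa only [coeff_Sc, GG, PP, EE, PowerSeries.coeff_mk] using this

/-- `J`-sum. -/
lemma J_sum {v : K} (h : Gen v) (J : ℕ) (hJ : 0 < J) :
    PowerSeries.coeff J (EE v * Sc v (2 * (J : ℤ) - 2) (PP v)) = 0 := by
  have h1 := GG_eq h ((J : ℤ) - 1)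
  have h2 := congrArg (Sc v J) h1
  rw [HH, Sc_mul, Sc_Sc h, Sc_Sc h] at h2
  rw [show (J : ℤ) + (-(J - 1) - 1) = 0 by ring, Sc_zero,
    show (J : ℤ) + (J - 1 - 1) = 2 * J - 2 by ring, mul_comm] at h2
  rw [← h2, coeff_Sc, GG, PowerSeries.coeff_mk]
  have := gb_eq_zero v (J - 1) J (by omega)
  rw [Nat.cast_sub (by omega)] at this
  push_cast at this
  rw [this, mul_zero]

lemma I_sum {v : K} (h : Gen v) (u : ℕ) (hu : 0 < u) :
    PowerSeries.coeff u (Sc v (3 * u - 4) (PP (v ^ 2)) * Sc v (-u - 2) (PP (v ^ 2))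
      * Sc v (-u) (EE v)) = 0 := by
  have h1 := GG_eq h.sq ((u : ℤ) - 1)
  have h2 := congrArg (Sc v u) h1
  rw [HH, Sc_mul, Sc_sq, Sc_sq, Sc_Sc h, Sc_Sc h] at h2
  rw [EE_sq h, Sc_mul, Sc_Sc h]
  have h3 : Sc v (-(u : ℤ) - 2) (PP (v ^ 2)) * Sc v (-u + -2) (EE (v ^ 2)) = 1 := by
    rw [show -(u : ℤ) + -2 = -u - 2 by ring, ← Sc_mul, PP_mul_EE h.sq, Sc_one]
  have h4 : Sc v (3 * u - 4) (PP (v ^ 2)) * Sc v (-(u : ℤ) - 2) (PP (v ^ 2))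
      * (Sc v (-u) (EE (v ^ 2)) * Sc v (-u + -2) (EE (v ^ 2)))
      = Sc v u (GG (v ^ 2) (u - 1)) := by
    rw [h2, show (u : ℤ) + 2 * ((u : ℤ) - 1 - 1) = 3 * u - 4 by ring,
      show (u : ℤ) + 2 * (-((u : ℤ) - 1) - 1) = -u by ring]
    linear_combination (Sc v (3 * u - 4) (PP (v ^ 2)) * Sc v (-u) (EE (v ^ 2))) * h3
  rw [h4, coeff_Sc, GG, PowerSeries.coeff_mk]
  have := gb_eq_zero (v ^ 2) (u - 1) u (by omega)
  rw [Nat.cast_sub (by omega)] at this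
  push_cast at this
  rw [this, mul_zero]

lemma t_sum {v : K} (h : Gen v) (l : ℕ) (hl : 0 < l) :
    ∑ t ∈ range (l + 1), (-1) ^ t * gb v l t * v ^ (-(t : ℤ) * (l - 1)) = 0 := by
  obtain ⟨n, rfl⟩ : ∃ n, l = n + 1 := ⟨l - 1, by omega⟩
  have key : ∀ k : ℕ, ∑ t ∈ range (k + 1),
      (-1) ^ t * gb v ((n + 1 : ℕ) : ℤ) t * v ^ (-(t : ℤ) * (((n + 1 : ℕ) : ℤ) - 1))
      = (-1) ^ k * v ^ (-(k : ℤ) * (n + 1)) * gb v n k := by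
    intro k
    induction k with
    | zero => simp [gb_zero_right]
    | succ k ih =>
      rw [Finset.sum_range_succ, ih]
      push_cast
      rw [gb_pascal h]
      have e1 : v ^ (-((k : ℤ) + 1) * (n + 1)) = v ^ (-((k : ℤ) + 1)) * v ^ (-((k : ℤ) + 1) * n) := by
        rw [← zpow_add₀ h.1]; congr 1; ring
      have e2 : v ^ (-(k : ℤ) * (n + 1)) = v ^ ((n : ℤ) - k) * v ^ (-((k : ℤ) + 1) * n) := by
        rw [← zpow_add₀ h.1]; congr 1; ring
      rw [e1, e2, show ((n : ℤ) + 1 - 1) = n by ring]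
      ring
  rw [key, gb_eq_zero v n (n + 1) (by omega), mul_zero]

lemma conv_GG {v : K} (h : Gen v) (a m1 m2 : ℤ) (s : ℕ) :
    ∑ x ∈ antidiagonal s, v ^ (a * ((x.1 : ℤ) - x.2)) * gb (v ^ 2) m1 x.1 * gb (v ^ 2) m2 x.2
    = PowerSeries.coeff s (Sc v (a + 2 * (m1 - 1)) (PP (v ^ 2)) * Sc v (a - 2 * m1 - 2) (EE (v ^ 2))
      * (Sc v (-a + 2 * (m2 - 1)) (PP (v ^ 2)) * Sc v (-a - 2 * m2 - 2) (EE (v ^ 2)))) := by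
  have h1 : ∀ (b m : ℤ), Sc v (b + 2 * (m - 1)) (PP (v ^ 2)) * Sc v (b - 2 * m - 2) (EE (v ^ 2))
      = Sc v b (GG (v ^ 2) m) := by
    intro b m
    rw [GG_eq h.sq, HH, Sc_mul, Sc_sq, Sc_sq, Sc_Sc h, Sc_Sc h]
    congr 2; ring
  rw [h1, h1, PowerSeries.coeff_mul]
  apply Finset.sum_congr rfl
  intro x _
  rw [coeff_Sc, coeff_Sc]
  simp only [GG, PowerSeries.coeff_mk]
  rw [show a * ((x.1 : ℤ) - x.2) = a * x.1 + -a * x.2 by ring, zpow_add₀ h.1]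
  ring

def phi (v : K) (A B D n : ℤ) : PowerSeries K :=
  Sc v (A + n) (PP (v ^ 2)) * Sc v (B + n) (PP (v ^ 2)) * Sc v (D - n) (EE v)

lemma phi_even {v : K} (h : Gen v) (u l x : ℤ) (s : ℕ) :
    ∑ y ∈ antidiagonal s, v ^ ((l + u) * ((y.1 : ℤ) - y.2)) * gb (v ^ 2) (u - 1 + x) y.1
      * gb (v ^ 2) (x - l) y.2
    = PowerSeries.coeff s (phi v (3 * u + l - 4) (-3 * l - u - 2) (l - u) (2 * x)) := by
  rw [conv_GG h, phi, EE_sq h, Sc_mul, Sc_Sc h,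
    show l + u + 2 * (u - 1 + x - 1) = 3 * u + l - 4 + 2 * x by ring,
    show l + u - 2 * (u - 1 + x) - 2 = l - u - 2 * x by ring,
    show -(l + u) + 2 * (x - l - 1) = -3 * l - u - 2 + 2 * x by ring,
    show -(l + u) - 2 * (x - l) - 2 = l - u - 2 * x + -2 by ring]
  congr 1
  ring

lemma phi_odd {v : K} (h : Gen v) (u l x : ℤ) (s : ℕ) :
    ∑ y ∈ antidiagonal s, v ^ ((l + u - 1) * ((y.1 : ℤ) - y.2)) * gb (v ^ 2) (u + x) y.1
      * gb (v ^ 2) (x - l) y.2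
    = PowerSeries.coeff s (phi v (3 * u + l - 4) (-3 * l - u - 2) (l - u) (2 * x + 1)) := by
  rw [conv_GG h, phi, EE_sq h, Sc_mul, Sc_Sc h,
    show l + u - 1 + 2 * (u + x - 1) = 3 * u + l - 4 + (2 * x + 1) by ring,
    show l + u - 1 - 2 * (u + x) - 2 = l - u - (2 * x + 1) + -2 by ring,
    show -(l + u - 1) + 2 * (x - l - 1) = -3 * l - u - 2 + (2 * x + 1) by ring,
    show -(l + u - 1) - 2 * (x - l) - 2 = l - u - (2 * x + 1) by ring]
  congr 1
  ring

def gg (v : K) (A B : ℤ) (i : ℕ) : K :=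
  PowerSeries.coeff i (Sc v A (PP (v ^ 2)) * Sc v B (PP (v ^ 2)))

lemma coeff_phi {v : K} (h : Gen v) (A B D n : ℤ) (s : ℕ) :
    PowerSeries.coeff s (phi v A B D n) = ∑ x ∈ antidiagonal s,
      v ^ (n * ((x.1 : ℤ) - x.2)) * gg v A B x.1 * (v ^ (D * (x.2 : ℤ)) * Ec v x.2) := by
  have h1 : phi v A B D n = Sc v n (Sc v A (PP (v ^ 2)) * Sc v B (PP (v ^ 2)))
      * Sc v (D - n) (EE v) := by
    rw [phi, Sc_mul, Sc_Sc h, Sc_Sc h, add_comm n A, add_comm n B]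
  rw [h1, PowerSeries.coeff_mul]
  apply Finset.sum_congr rfl
  intro x _
  rw [coeff_Sc, coeff_Sc]
  simp only [EE, PowerSeries.coeff_mk, gg]
  rw [show n * ((x.1 : ℤ) - x.2) = n * x.1 + -n * x.2 by ring, zpow_add₀ h.1,
    show (D - n) * (x.2 : ℤ) = D * x.2 + -n * x.2 by ring, zpow_add₀ h.1]
  ring

lemma quad_sum {M : Type*} [AddCommMonoid M] (u : ℕ) (f : ℕ → ℕ → ℕ → ℕ → M) :
    ∑ z ∈ antidiagonal u, ∑ x ∈ antidiagonal z.1, ∑ y ∈ antidiagonal z.2, f x.1 x.2 y.1 y.2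
    = ∑ z ∈ antidiagonal u, ∑ x ∈ antidiagonal z.1, ∑ y ∈ antidiagonal z.2,
      f x.1 y.1 x.2 y.2 := by
  simp only [← Finset.sum_product', Finset.sum_sigma']
  refine Finset.sum_bij'
    (fun a _ => ⟨(a.2.1.1 + a.2.2.1, a.2.1.2 + a.2.2.2), ((a.2.1.1, a.2.2.1), (a.2.1.2, a.2.2.2))⟩)
    (fun a _ => ⟨(a.2.1.1 + a.2.2.1, a.2.1.2 + a.2.2.2), ((a.2.1.1, a.2.2.1), (a.2.1.2, a.2.2.2))⟩)
    ?_ ?_ ?_ ?_ ?_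
  · rintro ⟨⟨s, r⟩, ⟨i, j⟩, ⟨k, m⟩⟩ ha
    simp at ha ⊢; omega
  · rintro ⟨⟨s, r⟩, ⟨i, j⟩, ⟨k, m⟩⟩ ha
    simp at ha ⊢; omega
  · rintro ⟨⟨s, r⟩, ⟨i, j⟩, ⟨k, m⟩⟩ ha
    simp at ha ⊢; omega
  · rintro ⟨⟨s, r⟩, ⟨i, j⟩, ⟨k, m⟩⟩ ha
    simp at ha ⊢; omega
  · rintro ⟨⟨s, r⟩, ⟨i, j⟩, ⟨k, m⟩⟩ ha
    rfl

def TT (v : K) (w : ℤ) (u l : ℕ) : K :=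
  ∑ z ∈ antidiagonal u, ∑ t ∈ range (l + 1),
    (-1) ^ (w + t - z.2 : ℤ) * v ^ (-(t : ℤ) * (l + u - 1)) * gb v l t * gb v (w + t - l) z.2
      * PowerSeries.coeff z.1 (phi v (3 * u + l - 4) (-3 * l - u - 2) (l - u) (w + t - z.2))

def Ipart (v : K) (A B l : ℤ) (J i k : ℕ) : K :=
  gg v A B i * (-1) ^ k * Pc v k * v ^ (-(k : ℤ) * i + k * J - (l + 1) * k)

def Jpart (v : K) (D l : ℤ) (I j m : ℕ) : K :=
  (-1) ^ m * v ^ (D * j) * Ec v j * Ec v m * v ^ (-(m : ℤ) * I + m * j + (l - 1) * m)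

lemma Ec_eq {v : K} (h : Gen v) (m : ℕ) :
    (-1) ^ m * Ec v m = v ^ ((m : ℤ) * (m - 1)) * Pc v m := by
  rw [Pc, Ec, ← mul_div_assoc, ← mul_div_assoc, ← zpow_add₀ h.1, ← mul_pow]
  simp

lemma Jpart_sum {v : K} (h : Gen v) (u l : ℤ) (I J : ℕ) (hu : u = I + J) (hJ : 0 < J) :
    ∑ y ∈ antidiagonal J, Jpart v (l - u) l I y.1 y.2 = 0 := by
  have h1 := J_sum h J hJ
  rw [PowerSeries.coeff_mul] at h1
  have h2 : ∑ y ∈ antidiagonal J, Jpart v (l - u) l I y.1 y.2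
      = v ^ ((l - u) * J) * ∑ p ∈ antidiagonal J, (PowerSeries.coeff p.1) (EE v) *
        (PowerSeries.coeff p.2) (Sc v (2 * ↑J - 2) (PP v)) := by
    rw [Finset.mul_sum]
    apply Finset.sum_congr rfl
    rintro ⟨j, m⟩ hy
    have hjm : j + m = J := by simpa using hy
    subst hjm
    subst hu
    rw [coeff_Sc]
    simp only [EE, PP, PowerSeries.coeff_mk, Jpart]
    have e := Ec_eq h m
    calc _ = ((-1) ^ m * Ec v m) * (Ec v j * (v ^ ((l - ((I : ℤ) + ((j + m : ℕ) : ℤ))) * j)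
          * v ^ (-(m : ℤ) * I + m * j + (l - 1) * m))) := by ring
      _ = (v ^ ((m : ℤ) * (m - 1)) * (v ^ ((l - ((I : ℤ) + ((j + m : ℕ) : ℤ))) * j)
          * v ^ (-(m : ℤ) * I + m * j + (l - 1) * m))) * Ec v j * Pc v m := by rw [e]; ring
      _ = (v ^ ((l - ((I : ℤ) + ((j + m : ℕ) : ℤ))) * ((j + m : ℕ) : ℤ))
          * v ^ ((2 * ((j + m : ℕ) : ℤ) - 2) * m)) * Ec v j * Pc v m := by
        congr 2
        simp only [← zpow_add₀ h.1]
        congr 1; push_cast; ring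
      _ = _ := by ring
  rw [h2, h1, mul_zero]

lemma Ipart_sum {v : K} (h : Gen v) (u : ℕ) (hu : 0 < u) :
    ∑ x ∈ antidiagonal u, Ipart v (3 * u - 4) (-u - 2) 0 0 x.1 x.2 = 0 := by
  rw [← I_sum h u hu, PowerSeries.coeff_mul]
  apply Finset.sum_congr rfl
  rintro ⟨i, k⟩ hx
  have hik : i + k = u := by simpa using hx
  subst hik
  rw [coeff_Sc]
  simp only [Ipart, gg, EE, PowerSeries.coeff_mk]
  have e := Ec_eq h k
  have e2 : Ec v k = (-1) ^ k * (v ^ ((k : ℤ) * (k - 1)) * Pc v k) := by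
    rw [← e, ← mul_assoc, ← mul_pow]; simp
  rw [e2]
  have e3 : v ^ (-(k : ℤ) * i + k * ((0 : ℕ) : ℤ) - (0 + 1) * k)
      = v ^ (-((i + k : ℕ) : ℤ) * k) * v ^ ((k : ℤ) * (k - 1)) := by
    rw [← zpow_add₀ h.1]; congr 1; push_cast; ring
  rw [e3]
  ring

lemma TT_term {v : K} (h : Gen v) (w A B : ℤ) (l i j k m t : ℕ) (u : ℤ)
    (hu : u = i + j + k + m) (g : K) :
    (-1) ^ (w + t - (k + m) : ℤ) * v ^ (-(t : ℤ) * (l + u - 1)) * g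
      * ((v ^ ((w + t - l - 1) * (k : ℤ)) * Pc v k) * (v ^ ((-(w + t - l) - 1) * (m : ℤ)) * Ec v m))
      * (v ^ ((w + t - (k + m)) * ((i : ℤ) - j)) * gg v A B i * (v ^ ((l - u) * (j : ℤ)) * Ec v j))
    = (-1) ^ w * v ^ (w * ((i : ℤ) + k - (j + m))) *
      ((-1) ^ t * g * v ^ (-(t : ℤ) * (l - 1 + 2 * (j + m)))) *
      (Ipart v A B l (j + m) i k * Jpart v (l - u) l (i + k) j m) := by
  have hs : (-1 : K) ^ (w + t - (k + m) : ℤ) = (-1) ^ w * (-1) ^ t * (-1) ^ k * (-1) ^ m := by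
    have h1 : (-1 : K) ≠ 0 := by simp
    rw [zpow_sub₀ h1, zpow_add₀ h1, zpow_add₀ h1]
    simp only [zpow_natCast]
    rw [div_eq_iff (by simp)]
    have hk : ((-1 : K) ^ k) * (-1) ^ k = 1 := by rw [← mul_pow]; simp
    have hm : ((-1 : K) ^ m) * (-1) ^ m = 1 := by rw [← mul_pow]; simp
    linear_combination (-(-1 : K) ^ w * (-1) ^ t * ((-1) ^ m * (-1) ^ m)) * hk - (-1 : K) ^ w * (-1) ^ t * hm
  rw [hs]
  simp only [Ipart, Jpart]
  have hv : v ^ (-(t : ℤ) * (l + u - 1)) * v ^ ((w + t - l - 1) * (k : ℤ))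
      * v ^ ((-(w + t - l) - 1) * (m : ℤ)) * v ^ ((w + t - (k + m)) * ((i : ℤ) - j))
      = v ^ (w * ((i : ℤ) + k - (j + m))) * v ^ (-(t : ℤ) * (l - 1 + 2 * (j + m)))
        * v ^ (-(k : ℤ) * i + k * ((j + m : ℕ) : ℤ) - (l + 1) * k)
        * v ^ (-(m : ℤ) * ((i + k : ℕ) : ℤ) + m * j + (l - 1) * m) := by
    simp only [← zpow_add₀ h.1]
    congr 1; push_cast; rw [hu]; ring
  linear_combination ((-1) ^ w * (-1) ^ t * (-1) ^ k * (-1) ^ m * g * Pc v k * Ec v m * gg v A B i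
    * v ^ ((l - u) * (j : ℤ)) * Ec v j) * hv

def FF (v : K) (w : ℤ) (u l : ℕ) (i j k m : ℕ) : K :=
  ∑ t ∈ range (l + 1),
        (-1) ^ w * v ^ (w * ((i : ℤ) + k - (j + m))) *
      ((-1) ^ t * gb v l t * v ^ (-(t : ℤ) * (l - 1 + 2 * (j + m)))) *
      (Ipart v (3 * u + l - 4) (-3 * l - u - 2) l (j + m) i k * Jpart v (l - u) l (i + k) j m)

lemma TT_eq_zero {v : K} (h : Gen v) (w : ℤ) (u l : ℕ) (hul : ¬ (u = 0 ∧ l = 0)) :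
    TT v w u l = 0 := by
  have h1 : TT v w u l = ∑ z ∈ antidiagonal u, ∑ x ∈ antidiagonal z.1, ∑ y ∈ antidiagonal z.2,
      (FF v w u l)
        x.1 x.2 y.1 y.2 := by
    unfold TT
    apply Finset.sum_congr rfl
    rintro ⟨s, r⟩ hz
    have hz' : s + r = u := by simpa using hz
    simp only [FF]
    rw [Finset.sum_congr rfl fun x _ => Finset.sum_comm, Finset.sum_comm]
    apply Finset.sum_congr rfl
    intro t _
    rw [coeff_phi h, gb_expand h (w + t - l), Finset.mul_sum]
    apply Finset.sum_congr rfl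
    rintro ⟨i, j⟩ hx
    have hx' : i + j = s := by simpa using hx
    rw [Finset.mul_sum, Finset.sum_mul]
    apply Finset.sum_congr rfl
    rintro ⟨k, m⟩ hy
    have hy' : k + m = r := by simpa using hy
    have := TT_term h w (3 * u + l - 4) (-3 * l - u - 2) l i j k m t u (by omega) (gb v l t)
    rw [← this]
    subst hy'
    push_cast
    rfl
  rw [h1]
  refine (quad_sum u (FF v w u l)).trans ?_
  apply Finset.sum_eq_zero
  rintro ⟨I, J⟩ hz
  have hz' : I + J = u := by simpa using hz
  have h2 : ∑ x ∈ antidiagonal I, ∑ y ∈ antidiagonal J,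
      (FF v w u l)
        x.1 y.1 x.2 y.2
      = (-1) ^ w * v ^ (w * ((I : ℤ) - J)) *
      (∑ t ∈ range (l + 1), (-1) ^ t * gb v l t * v ^ (-(t : ℤ) * (l - 1 + 2 * J))) *
      ((∑ x ∈ antidiagonal I, Ipart v (3 * u + l - 4) (-3 * l - u - 2) l J x.1 x.2)
        * ∑ y ∈ antidiagonal J, Jpart v (l - u) l I y.1 y.2) := by
    rw [Finset.sum_mul_sum, Finset.mul_sum]
    apply Finset.sum_congr rfl
    rintro ⟨i, k⟩ hx
    have hx' : i + k = I := by simpa using hx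
    rw [Finset.mul_sum]
    apply Finset.sum_congr rfl
    rintro ⟨j, m⟩ hy
    have hy' : j + m = J := by simpa using hy
    subst hx'
    subst hy'
    simp only [FF]
    rw [← Finset.sum_mul, ← Finset.mul_sum]
    push_cast
    rfl
  simp only at h2 ⊢
  rw [h2]
  rcases Nat.eq_zero_or_pos J with hJ | hJ
  · rcases Nat.eq_zero_or_pos l with hl | hl
    · subst hJ
      subst hl
      have hI : I = u := by omega
      subst hI
      have h3 := Ipart_sum h I (by omega)
      have e1 : (3 * (I : ℤ) + ((0 : ℕ) : ℤ) - 4) = 3 * I - 4 := by simp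
      have e2 : (-3 * ((0 : ℕ) : ℤ) - I - 2) = -I - 2 := by simp
      rw [e1, e2, Nat.cast_zero, h3]
      ring
    · subst hJ
      have h3 := t_sum h l hl
      simp only [Nat.cast_zero, mul_zero, add_zero]
      rw [h3]
      ring
  · rw [Jpart_sum h u l I J (by omega) hJ]
    ring

end Generic

lemma Gen_qq : Gen qq := by
  have h0 : (qq : F) ≠ 0 := RatFunc.X_ne_zero
  have hn : ∀ n : ℕ, n ≠ 0 → qq ^ n ≠ 1 := by
    intro n hn h
    unfold qq at h
    rw [← RatFunc.algebraMap_X, ← map_pow, ← map_one (algebraMap (Polynomial ℚ) (RatFunc ℚ))] at h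
    have := RatFunc.algebraMap_injective ℚ h
    have h2 := congrArg Polynomial.natDegree this
    simp at h2
    exact hn h2
  refine ⟨h0, fun n hne h => ?_⟩
  rcases Int.eq_nat_or_neg n with ⟨k, rfl | rfl⟩
  · exact hn k (by omega) (by simpa using h)
  · exact hn k (by omega) (by simpa using h)

lemma qbinom_eq (v : F) (n : ℤ) (c : ℕ) : qbinom v n (c : ℤ) = gb v n c := by
  unfold qbinom gb qfact
  rw [if_neg (by omega)]
  rfl

lemma triple_sum {M : Type*} [AddCommMonoid M] (u : ℕ) (f : ℕ → ℕ → ℕ → M) :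
    ∑ c ∈ range (u + 1), ∑ e ∈ range (u + 1 - c), f c e (u - c - e)
    = ∑ z ∈ antidiagonal u, ∑ x ∈ antidiagonal z.1, f x.1 x.2 z.2 := by
  simp only [Finset.sum_sigma']
  refine Finset.sum_bij'
    (fun a _ => ⟨(a.1 + a.2, u - a.1 - a.2), (a.1, a.2)⟩)
    (fun a _ => ⟨a.2.1, a.2.2⟩)
    ?_ ?_ ?_ ?_ ?_
  · rintro ⟨c, e⟩ ha
    simp at ha ⊢; omega
  · rintro ⟨⟨s, r⟩, ⟨c, e⟩⟩ ha
    simp at ha ⊢; omega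
  · rintro ⟨c, e⟩ ha
    rfl
  · rintro ⟨⟨s, r⟩, ⟨c, e⟩⟩ ha
    simp at ha ⊢; omega
  · rintro ⟨c, e⟩ ha
    rfl

lemma T_eq_TT (w : ℤ) (u ℓ : ℕ) : T w u ℓ = TT qq w u ℓ := by
  have h := Gen_qq
  unfold T TT
  simp only [qbinom_eq]
  rw [triple_sum u (fun c e r => ∑ t ∈ range (ℓ + 1), if Even ((t : ℤ) + w - (r : ℤ)) then
         qq ^ (-(t : ℤ) * ((ℓ : ℤ) + (u : ℤ) - 1) + ((ℓ : ℤ) + (u : ℤ)) * ((c : ℤ) - (e : ℤ)))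
           * gb qq (ℓ : ℤ) t * gb qq (w + (t : ℤ) - (ℓ : ℤ)) r
           * gb (qq ^ 2) ((u : ℤ) - 1 + (w + (t : ℤ) - (r : ℤ)) / 2) c
           * gb (qq ^ 2) ((w + (t : ℤ) - (r : ℤ)) / 2 - (ℓ : ℤ)) e
       else 0),
    triple_sum u (fun c e r => ∑ t ∈ range (ℓ + 1), if ¬ Even ((t : ℤ) + w - (r : ℤ)) then
         qq ^ (-(t : ℤ) * ((ℓ : ℤ) + (u : ℤ) - 1) + ((ℓ : ℤ) + (u : ℤ) - 1) * ((c : ℤ) - (e : ℤ)))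
           * gb qq (ℓ : ℤ) t * gb qq (w + (t : ℤ) - (ℓ : ℤ)) r
           * gb (qq ^ 2) ((u : ℤ) + (w + (t : ℤ) - (r : ℤ) - 1) / 2) c
           * gb (qq ^ 2) ((w + (t : ℤ) - (r : ℤ) - 1) / 2 - (ℓ : ℤ)) e
       else 0), ← Finset.sum_sub_distrib]
  apply Finset.sum_congr rfl
  rintro ⟨s, r⟩ _
  simp only
  rw [Finset.sum_comm, Finset.sum_comm (s := antidiagonal s), ← Finset.sum_sub_distrib]
  apply Finset.sum_congr rfl
  intro t _
  by_cases hp : Even ((t : ℤ) + w - (r : ℤ))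
  · obtain ⟨x, hx⟩ := hp
    have hn : w + t - r = 2 * x := by omega
    have hp : Even ((t : ℤ) + w - (r : ℤ)) := ⟨x, hx⟩
    simp only [hp, not_true_eq_false, if_true, if_false, Finset.sum_const_zero, sub_zero]
    rw [hn, ← phi_even h, Finset.mul_sum]
    have hs : (-1 : F) ^ (2 * x) = 1 := by rw [zpow_mul]; norm_num
    rw [hs]
    apply Finset.sum_congr rfl
    intro y _
    rw [zpow_add₀ h.1, show 2 * x / 2 = x by omega]
    ring
  · obtain ⟨x, hx⟩ := Int.not_even_iff_odd.1 hp
    have hn : w + t - r = 2 * x + 1 := by omega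
    simp only [hp, not_false_eq_true, if_true, if_false, Finset.sum_const_zero, zero_sub]
    rw [hn, ← phi_odd h, Finset.mul_sum]
    have hs : (-1 : F) ^ (2 * x + 1) = -1 := by
      rw [zpow_add₀ (by simp), zpow_mul]; norm_num
    rw [hs, ← Finset.sum_neg_distrib]
    apply Finset.sum_congr rfl
    intro y _
    rw [zpow_add₀ h.1, show (2 * x + 1 - 1) / 2 = x by omega]
    ring

/-- For every integer `w` and all nonnegative integers `u, ℓ` not both zero, `T(w,u,ℓ) = 0`. -/
theorem T_eq_zero (w : ℤ) (u ℓ : ℕ) (h : ¬ (u = 0 ∧ ℓ = 0)) : T w u ℓ = 0 := by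
  rw [T_eq_TT]
  exact TT_eq_zero Gen_qq w u ℓ h

end
end

section
/- For all integers w, p0, p1, p2 and all nonnegative integers u, ℓ, one has G(w+1,u,ℓ;p0,p1,p2) = q^{−2u} G(w,u,ℓ;p0,p2,p1+1) − q^{2p0+ℓ} G(w,u−1,ℓ;p0,p1,p2), where G at the second argument u−1 is interpreted as 0 when u = 0. -/
open Finset

noncomputable section

/-- The function `G(w,u,ℓ;p0,p1,p2)` of [CLW, (5.1)]. -/
noncomputable def G (w : ℤ) (u ℓ : ℕ) (p0 p1 p2 : ℤ) : F :=
  (-1 : F) ^ w * qq ^ ((u : ℤ) ^ 2 - w * (u : ℤ) + (ℓ : ℤ) * (u : ℤ)) *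
  ((∑ c ∈ range (u + 1), ∑ e ∈ range (u + 1 - c), ∑ t ∈ range (ℓ + 1),
      (let r : ℕ := u - c - e;
       if Even ((t : ℤ) + w - (r : ℤ)) then
         qq ^ (-(t : ℤ) * ((ℓ : ℤ) + (u : ℤ) - 1) - (u : ℤ) * ((c : ℤ) + (e : ℤ)) + 2 * (c : ℤ)
               + (r : ℤ) * p0 + 2 * (c : ℤ) * p1 + 2 * (e : ℤ) * p2)
           * qbinom qq (ℓ : ℤ) (t : ℤ) * qbinom qq (w + (t : ℤ) + p0) (r : ℤ)
           * qbinom (qq ^ 2) ((w + (t : ℤ) - (r : ℤ)) / 2 + p1) (c : ℤ)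
           * qbinom (qq ^ 2) ((w + (t : ℤ) - (r : ℤ)) / 2 + p2) (e : ℤ)
       else 0))
  - (∑ c ∈ range (u + 1), ∑ e ∈ range (u + 1 - c), ∑ t ∈ range (ℓ + 1),
      (let r : ℕ := u - c - e;
       if ¬ Even ((t : ℤ) + w - (r : ℤ)) then
         qq ^ (-(t : ℤ) * ((ℓ : ℤ) + (u : ℤ) - 1) - ((u : ℤ) - 1) * ((c : ℤ) + (e : ℤ))
               + (r : ℤ) * p0 + 2 * (c : ℤ) * p1 + 2 * (e : ℤ) * p2)
           * qbinom qq (ℓ : ℤ) (t : ℤ) * qbinom qq (w + (t : ℤ) + p0) (r : ℤ)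
           * qbinom (qq ^ 2) (1 + (w + (t : ℤ) - (r : ℤ) - 1) / 2 + p1) (c : ℤ)
           * qbinom (qq ^ 2) ((w + (t : ℤ) - (r : ℤ) - 1) / 2 + p2) (e : ℤ)
       else 0)))


theorem qq_ne : qq ≠ 0 := RatFunc.X_ne_zero

theorem qq_pow_ne_one (m : ℕ) (hm : m ≠ 0) : qq ^ m ≠ 1 := by
  intro h
  have h2 : algebraMap (Polynomial ℚ) (RatFunc ℚ) (Polynomial.X ^ m)
      = algebraMap (Polynomial ℚ) (RatFunc ℚ) 1 := by
    rw [map_pow, RatFunc.algebraMap_X, map_one]; exact h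
  have h3 := RatFunc.algebraMap_injective ℚ h2
  have h4 := congrArg Polynomial.natDegree h3
  simp at h4
  exact hm h4

theorem qint_succ_ne (k : ℕ) : qint qq ((k : ℤ) + 1) ≠ 0 := by
  have key : ∀ m : ℕ, qq ^ ((m : ℤ) + 1) - qq ^ (-((m : ℤ) + 1)) ≠ 0 := by
    intro m h
    have h1 : qq ^ ((m : ℤ) + 1) = qq ^ (-((m : ℤ) + 1)) := sub_eq_zero.mp h
    have h2 : qq ^ (2 * (m + 1)) = 1 := by
      have : qq ^ ((m : ℤ) + 1) * qq ^ ((m : ℤ) + 1) = 1 := by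
        nth_rewrite 1 [h1]
        rw [← zpow_add₀ qq_ne]; simp
      rw [← zpow_add₀ qq_ne] at this
      rw [← this, ← zpow_natCast]
      congr 1
      push_cast; ring
    exact qq_pow_ne_one _ (by omega) h2
  unfold qint
  refine div_ne_zero (key k) ?_
  have := key 0
  simpa using this

theorem qint_add (N k : ℤ) : qint qq (N + 1)
    = qq ^ (-(k + 1)) * qint qq (N - k) + qq ^ (N - k) * qint qq (k + 1) := by
  unfold qint
  rw [mul_div_assoc', mul_div_assoc', ← add_div]
  congr 1
  rw [mul_sub, mul_sub]
  simp only [← zpow_add₀ qq_ne]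
  ring_nf

theorem qfact_ne (k : ℕ) : qfact qq k ≠ 0 := by
  unfold qfact
  exact Finset.prod_ne_zero_iff.mpr fun j _ => qint_succ_ne j

theorem pascal (N r : ℤ) : qbinom qq (N + 1) r
    = qq ^ (-r) * qbinom qq N r + qq ^ (N + 1 - r) * qbinom qq N (r - 1) := by
  rcases lt_trichotomy r 0 with h | h | h
  · have h' : r - 1 < 0 := by omega
    simp [qbinom, h, h']
  · subst h
    simp [qbinom, qfact]
  · obtain ⟨k, rfl⟩ : ∃ k : ℕ, r = (k : ℤ) + 1 := ⟨(r - 1).toNat, by omega⟩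
    have e1 : ¬ ((k : ℤ) + 1 < 0) := by omega
    have e2 : ¬ ((k : ℤ) + 1 - 1 < 0) := by omega
    have e3 : ((k : ℤ) + 1).toNat = k + 1 := by omega
    have e4 : ((k : ℤ) + 1 - 1).toNat = k := by omega
    simp only [qbinom, e1, e2, e3, e4, if_false]
    have f1 : qfact qq (k + 1) = qfact qq k * qint qq ((k : ℤ) + 1) := by
      simp [qfact, Finset.prod_range_succ]
    have f2 : ∏ j ∈ range (k + 1), qint qq (N + 1 - (j : ℤ))
        = (∏ j ∈ range k, qint qq (N - (j : ℤ))) * qint qq (N + 1) := by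
      rw [Finset.prod_range_succ']
      congr 1
      · refine Finset.prod_congr rfl fun j _ => ?_
        congr 1; push_cast; ring
      · simp
    rw [f1, f2, Finset.prod_range_succ, qint_add N k]
    have a1 := qfact_ne k
    have a2 := qint_succ_ne k
    have a3 : N + 1 - ((k : ℤ) + 1) = N - k := by ring
    rw [a3]
    generalize qfact qq k = A at *
    generalize qint qq ((k : ℤ) + 1) = B at *
    field_simp

/-- Single term of `G`, including prefactor, with integer arguments. -/
def gt (w u ℓ p0 p1 p2 c e t : ℤ) : F :=
  (-1 : F) ^ w * qq ^ (u ^ 2 - w * u + ℓ * u) *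
    (if Even (t + w - (u - c - e)) then
         qq ^ (-t * (ℓ + u - 1) - u * (c + e) + 2 * c
               + (u - c - e) * p0 + 2 * c * p1 + 2 * e * p2)
           * qbinom qq ℓ t * qbinom qq (w + t + p0) (u - c - e)
           * qbinom (qq ^ 2) ((w + t - (u - c - e)) / 2 + p1) c
           * qbinom (qq ^ 2) ((w + t - (u - c - e)) / 2 + p2) e
     else
         -(qq ^ (-t * (ℓ + u - 1) - (u - 1) * (c + e)
               + (u - c - e) * p0 + 2 * c * p1 + 2 * e * p2)
           * qbinom qq ℓ t * qbinom qq (w + t + p0) (u - c - e)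
           * qbinom (qq ^ 2) (1 + (w + t - (u - c - e) - 1) / 2 + p1) c
           * qbinom (qq ^ 2) ((w + t - (u - c - e) - 1) / 2 + p2) e))

theorem G_eq (w : ℤ) (u ℓ : ℕ) (p0 p1 p2 : ℤ) : G w u ℓ p0 p1 p2
    = ∑ c ∈ range (u + 1), ∑ e ∈ range (u + 1 - c), ∑ t ∈ range (ℓ + 1),
      gt w u ℓ p0 p1 p2 c e t := by
  unfold G
  simp only [← Finset.sum_sub_distrib, Finset.mul_sum]
  refine Finset.sum_congr rfl fun c hc => Finset.sum_congr rfl fun e he =>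
    Finset.sum_congr rfl fun t _ => ?_
  rw [Finset.mem_range] at hc he
  have hr : ((u - c - e : ℕ) : ℤ) = (u : ℤ) - c - e := by omega
  unfold gt
  rw [hr]
  by_cases h : Even ((t : ℤ) + w - ((u : ℤ) - c - e))
  · simp only [h, not_true_eq_false, if_true, if_false, sub_zero]
  · simp only [h, not_false_eq_true, if_true, if_false, zero_sub]

theorem aux_even (s A x y Y Z : F) (a1 b1 a2 b2 a3 b3 g h α β : ℤ)
    (h2 : g + a2 + b2 = a1 + b1 + α) (h3 : h + a3 + b3 = a1 + b1 + β) :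
    -s * qq ^ a1 * (-(qq ^ b1 * A * (qq ^ α * Y + qq ^ β * Z) * x * y))
      = qq ^ g * (s * qq ^ a2 * (qq ^ b2 * A * Y * y * x))
        - qq ^ h * (s * qq ^ a3 * (-(qq ^ b3 * A * Z * x * y))) := by
  have k2 : qq ^ g * qq ^ a2 * qq ^ b2 = qq ^ a1 * qq ^ b1 * qq ^ α := by
    simp only [← zpow_add₀ qq_ne, h2]
  have k3 : qq ^ h * qq ^ a3 * qq ^ b3 = qq ^ a1 * qq ^ b1 * qq ^ β := by
    simp only [← zpow_add₀ qq_ne, h3]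
  linear_combination (-s * A * Y * y * x) * k2 - (s * A * Z * x * y) * k3

theorem aux_odd (s A x y Y Z : F) (a1 b1 a2 b2 a3 b3 g h α β : ℤ)
    (h2 : g + a2 + b2 = a1 + b1 + α) (h3 : h + a3 + b3 = a1 + b1 + β) :
    -s * qq ^ a1 * (qq ^ b1 * A * (qq ^ α * Y + qq ^ β * Z) * x * y)
      = qq ^ g * (s * qq ^ a2 * (-(qq ^ b2 * A * Y * y * x)))
        - qq ^ h * (s * qq ^ a3 * (qq ^ b3 * A * Z * x * y)) := by
  have k2 : qq ^ g * qq ^ a2 * qq ^ b2 = qq ^ a1 * qq ^ b1 * qq ^ α := by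
    simp only [← zpow_add₀ qq_ne, h2]
  have k3 : qq ^ h * qq ^ a3 * qq ^ b3 = qq ^ a1 * qq ^ b1 * qq ^ β := by
    simp only [← zpow_add₀ qq_ne, h3]
  linear_combination (s * A * Y * y * x) * k2 + (s * A * Z * x * y) * k3

theorem gt_rec (w u ℓ p0 p1 p2 c e t : ℤ) : gt (w + 1) u ℓ p0 p1 p2 c e t
    = qq ^ (-2 * u) * gt w u ℓ p0 p2 (p1 + 1) e c t
      - qq ^ (2 * p0 + ℓ) * gt w (u - 1) ℓ p0 p1 p2 c e t := by
  have hs : (-1 : F) ^ (w + 1) = - (-1 : F) ^ w := by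
    rw [zpow_add₀ (by simp)]; simp
  have hP := pascal (w + t + p0) (u - c - e)
  have n1 : w + 1 + t + p0 = w + t + p0 + 1 := by ring
  have n2 : u - 1 - c - e = u - c - e - 1 := by ring
  have n3 : u - e - c = u - c - e := by ring
  unfold gt
  rw [hs, n1, n2, n3, hP]
  rcases Int.even_or_odd' (w + t - (u - c - e)) with ⟨k, hk | hk⟩
  · have c1 : ¬ Even (t + (w + 1) - (u - c - e)) := by
      rw [Int.even_iff]; omega
    have c2 : Even (t + w - (u - c - e)) := by
      rw [Int.even_iff]; omega
    have c3 : ¬ Even (t + w - (u - c - e - 1)) := by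
      rw [Int.even_iff]; omega
    have d1 : 1 + (w + 1 + t - (u - c - e) - 1) / 2 + p1 = k + (p1 + 1) := by omega
    have d2 : (w + 1 + t - (u - c - e) - 1) / 2 + p2 = k + p2 := by omega
    have d3 : (w + t - (u - c - e)) / 2 = k := by omega
    have d4 : 1 + (w + t - (u - c - e - 1) - 1) / 2 + p1 = k + (p1 + 1) := by omega
    have d5 : (w + t - (u - c - e - 1) - 1) / 2 + p2 = k + p2 := by omega
    rw [if_neg c1, if_pos c2, if_neg c3, d1, d2, d3, d4, d5]
    apply aux_even <;> ring
  · have c1 : Even (t + (w + 1) - (u - c - e)) := by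
      rw [Int.even_iff]; omega
    have c2 : ¬ Even (t + w - (u - c - e)) := by
      rw [Int.even_iff]; omega
    have c3 : Even (t + w - (u - c - e - 1)) := by
      rw [Int.even_iff]; omega
    have d1 : (w + 1 + t - (u - c - e)) / 2 = k + 1 := by omega
    have d2 : 1 + (w + t - (u - c - e) - 1) / 2 + p2 = k + 1 + p2 := by omega
    have d3 : (w + t - (u - c - e) - 1) / 2 + (p1 + 1) = k + 1 + p1 := by omega
    have d4 : (w + t - (u - c - e - 1)) / 2 = k + 1 := by omega
    rw [if_pos c1, if_neg c2, if_pos c3, d1, d2, d3, d4]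
    apply aux_odd <;> ring

theorem sum_swap (n : ℕ) (f : ℕ → ℕ → F) :
    ∑ c ∈ range n, ∑ e ∈ range (n - c), f e c = ∑ c ∈ range n, ∑ e ∈ range (n - c), f c e := by
  refine Finset.sum_comm' fun x y => ?_
  simp only [Finset.mem_range]; omega

theorem sum_ext (v : ℕ) (f : ℕ → ℕ → F) (h : ∀ c e, c + e = v → f c e = 0) :
    ∑ c ∈ range (v + 1), ∑ e ∈ range (v + 1 - c), f c e
      = ∑ c ∈ range v, ∑ e ∈ range (v - c), f c e := by
  rw [Finset.sum_range_succ]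
  have h1 : ∑ e ∈ range (v + 1 - v), f v e = 0 := by
    have : v + 1 - v = 1 := by omega
    rw [this]; simp [h v 0]
  rw [h1, add_zero]
  refine Finset.sum_congr rfl fun c hc => ?_
  rw [Finset.mem_range] at hc
  have : v + 1 - c = (v - c) + 1 := by omega
  rw [this, Finset.sum_range_succ, h c (v - c) (by omega), add_zero]

theorem gt_zero (w u ℓ p0 p1 p2 c e t : ℤ) (h : u - c - e < 0) :
    gt w u ℓ p0 p1 p2 c e t = 0 := by
  have : ∀ n, qbinom qq n (u - c - e) = 0 := fun n => by simp [qbinom, h]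
  simp [gt, this]

/-- Recursion in `w`:
`G(w+1,u,ℓ;p0,p1,p2) = q^{−2u} G(w,u,ℓ;p0,p2,p1+1) − q^{2p0+ℓ} G(w,u−1,ℓ;p0,p1,p2)`,
where the term with second argument `u−1` is interpreted as `0` when `u = 0`. -/
theorem G_rec_w (w p0 p1 p2 : ℤ) (u ℓ : ℕ) :
    G (w + 1) u ℓ p0 p1 p2
      = qq ^ (-2 * (u : ℤ)) * G w u ℓ p0 p2 (p1 + 1)
        - qq ^ (2 * p0 + (ℓ : ℤ)) * (if u = 0 then 0 else G w (u - 1) ℓ p0 p1 p2) := by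
  have h1 := sum_swap (u + 1) fun c e => ∑ t ∈ range (ℓ + 1), gt w u ℓ p0 p2 (p1 + 1) c e t
  have h2 := sum_ext u (fun c e => ∑ t ∈ range (ℓ + 1), gt w ((u : ℤ) - 1) ℓ p0 p1 p2 c e t)
    (fun c e hce => Finset.sum_eq_zero fun t _ => gt_zero _ _ _ _ _ _ _ _ _ (by omega))
  have h3 : (if u = 0 then 0 else G w (u - 1) ℓ p0 p1 p2)
      = ∑ c ∈ range u, ∑ e ∈ range (u - c), ∑ t ∈ range (ℓ + 1),
        gt w ((u : ℤ) - 1) ℓ p0 p1 p2 c e t := by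
    cases u with
    | zero => simp
    | succ v =>
      rw [if_neg (Nat.succ_ne_zero v), Nat.add_sub_cancel, G_eq]
      have : ((v + 1 : ℕ) : ℤ) - 1 = v := by push_cast; ring
      rw [this]
  rw [h3, G_eq, G_eq, ← h1, ← h2]
  simp only [gt_rec, Finset.sum_sub_distrib, ← Finset.mul_sum]

end
end

section
/- For all integers w, p0, p1, p2 and all nonnegative integers u, ℓ, one has G(w+1,u,ℓ;p0,p1,p2) = q^{−2u} G(w,u,ℓ;p0+1,p2,p1+1). -/
open Finset

noncomputable section

theorem tri_swap (u : ℕ) (f : ℕ → ℕ → F) :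
    (∑ c ∈ range (u + 1), ∑ e ∈ range (u + 1 - c), f c e)
      = ∑ c ∈ range (u + 1), ∑ e ∈ range (u + 1 - c), f e c := by
  apply Finset.sum_comm'
  intro x y
  simp only [mem_range]
  omega

/-- `G(w+1,u,ℓ;p0,p1,p2) = q^{−2u} G(w,u,ℓ;p0+1,p2,p1+1)`. -/
theorem G_odd_shift (w p0 p1 p2 : ℤ) (u ℓ : ℕ) :
    G (w + 1) u ℓ p0 p1 p2 = qq ^ (-2 * (u : ℤ)) * G w u ℓ (p0 + 1) p2 (p1 + 1) := by
  have hq : qq ≠ 0 := RatFunc.X_ne_zero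
  unfold G
  rw [zpow_add_one₀ (by norm_num : (-1 : F) ≠ 0)]
  have key : ∀ A B C D : F, A = qq ^ (-(u : ℤ)) * D → B = qq ^ (-(u : ℤ)) * C →
      (-1 : F) ^ w * (-1) * qq ^ ((u : ℤ) ^ 2 - (w + 1) * (u : ℤ) + (ℓ : ℤ) * (u : ℤ)) * (A - B)
      = qq ^ (-2 * (u : ℤ)) * ((-1 : F) ^ w
        * qq ^ ((u : ℤ) ^ 2 - w * (u : ℤ) + (ℓ : ℤ) * (u : ℤ)) * (C - D)) := by
    intro A B C D hA hB
    have h1 : qq ^ ((u : ℤ) ^ 2 - (w + 1) * (u : ℤ) + (ℓ : ℤ) * (u : ℤ))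
        = qq ^ (-(u : ℤ)) * qq ^ ((u : ℤ) ^ 2 - w * (u : ℤ) + (ℓ : ℤ) * (u : ℤ)) := by
      rw [← zpow_add₀ hq]; congr 1; ring
    have h2 : qq ^ (-2 * (u : ℤ)) = qq ^ (-(u : ℤ)) * qq ^ (-(u : ℤ)) := by
      rw [← zpow_add₀ hq]; congr 1; ring
    rw [hA, hB, h1, h2]; ring
  apply key
  · rw [tri_swap]
    simp only [Finset.mul_sum]
    refine Finset.sum_congr rfl fun c hc => Finset.sum_congr rfl fun e he =>
      Finset.sum_congr rfl fun t _ => ?_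
    simp only [mem_range] at hc he
    rw [Nat.sub_right_comm u e c]
    obtain ⟨r, hr⟩ : ∃ r, r = u - c - e := ⟨_, rfl⟩
    have hu : (u : ℤ) = c + e + r := by omega
    simp only [← hr]
    by_cases h : Even ((t : ℤ) + w - (r : ℤ))
    · have h' : ¬ Even ((t : ℤ) + (w + 1) - (r : ℤ)) := by
        rw [Int.even_iff] at h ⊢; omega
      simp [h, h']
    · have h' : Even ((t : ℤ) + (w + 1) - (r : ℤ)) := by
        rw [Int.even_iff] at h ⊢; omega
      rw [if_pos h', if_pos h]
      have a1 : w + 1 + (t : ℤ) + p0 = w + t + (p0 + 1) := by ring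
      have a2 : (w + 1 + (t : ℤ) - r) / 2 + p1 = (w + t - r - 1) / 2 + (p1 + 1) := by omega
      have a3 : (w + 1 + (t : ℤ) - r) / 2 + p2 = 1 + (w + t - r - 1) / 2 + p2 := by omega
      rw [a1, a2, a3]
      simp only [← mul_assoc]
      rw [← zpow_add₀ hq, mul_right_comm _ (qbinom (qq ^ 2) _ (e : ℤ))]
      congr 4
      rw [hu]; ring
  · rw [tri_swap]
    simp only [Finset.mul_sum]
    refine Finset.sum_congr rfl fun c hc => Finset.sum_congr rfl fun e he =>
      Finset.sum_congr rfl fun t _ => ?_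
    simp only [mem_range] at hc he
    rw [Nat.sub_right_comm u e c]
    obtain ⟨r, hr⟩ : ∃ r, r = u - c - e := ⟨_, rfl⟩
    have hu : (u : ℤ) = c + e + r := by omega
    simp only [← hr]
    by_cases h : Even ((t : ℤ) + w - (r : ℤ))
    · have h' : ¬ Even ((t : ℤ) + (w + 1) - (r : ℤ)) := by
        rw [Int.even_iff] at h ⊢; omega
      rw [if_pos h', if_pos h]
      have a1 : w + 1 + (t : ℤ) + p0 = w + t + (p0 + 1) := by ring
      have a2 : 1 + (w + 1 + (t : ℤ) - r - 1) / 2 + p1 = (w + t - r) / 2 + (p1 + 1) := by omega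
      have a3 : (w + 1 + (t : ℤ) - r - 1) / 2 + p2 = (w + t - r) / 2 + p2 := by omega
      rw [a1, a2, a3]
      simp only [← mul_assoc]
      rw [← zpow_add₀ hq, mul_right_comm _ (qbinom (qq ^ 2) _ (e : ℤ))]
      congr 4
      rw [hu]; ring
    · have h' : Even ((t : ℤ) + (w + 1) - (r : ℤ)) := by
        rw [Int.even_iff] at h ⊢; omega
      simp [h, h']

end
end
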